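/- Let N≥1 and let K:[0,T]×ℝ^N×ℝ^N→[0,∞) satisfy the weak-(*)-kernel condition for parameters 0<α<2, 0<ζ≤∞, 0≤ω<α, 1≤Λ<∞ (and, when α≥1, α−1<ν<1, 0<s₀≤∞, 0≤τ<∞ with ν+ω<min{N,α}). Then for every f ∈ C²(ℝ^N)∩L¹(ℝ^N), every t∈[0,T], and every x∈ℝ^N, the principal value T^K_t(f)(x) := lim_{ε→0⁺} ∫_{|x−y|≥ε}[f(x)−f(y)]K(t,x,y)dy exists, and there is a constant C depending only on N and the parameters such that |T^K_t(f)(x)| ≤ C·( |f(x)| + ‖f‖_{L¹(ℝ^N)} + |∇f(x)| + ‖∇²f‖_{L^∞(B_x(1))} ), where B_x(1) is the unit ball centered at x. -/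

import Mathlib

/-!
After the translation `y = x + z`, write `κ(z) = K(t, x, x + z)`, so that
`0 ≤ κ(z) ≤ Λ(|z|^{-N-α} + |z|^{ω-N-α})`. For a radius `r ≤ 1` the truncated integral is the sum of

* the part over `|z| ≥ r`, which converges absolutely because `ω < α` and `f` is integrable
  (`far_integrable`);
* the part over `ε ≤ |z| < r` of `(f(x) - f(x+z) + ∇f(x)·z) κ(z)`, which converges absolutely at
  `0` by the Taylor estimate and `α < 2` (`near_integrable`);
* minus `∇f(x)` applied to the first moment `∫_{ε ≤ |z| < r} κ(z) z dz` (`exists_drift`).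

The first moment converges absolutely if `α < 1`. If `α ≥ 1`, polar coordinates turn it into
`∫_ε^r s^{-α} V(s) ds` with `V(s) = ∫_S k(t, x, sσ) σ dσ`, and the cancellation condition gives
`|V(s)| ≤ C s^ν` with `ν - α > -1`.

Polar coordinates involve `Measure.toSphere`, while the cancellation condition is formulated with
the Hausdorff measure `μH[N - 1]`. Both are finite rotation invariant measures on the sphere, hence
proportional; this is shown by comparing characteristic functions (`invariant_proportional`).
The constant is finite because `μH[N - 1]` of the sphere is positive, and the argument applies
because it is finite (`hausdorff_sphere_pos`, `hausdorff_sphere_lt_top`).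
-/

open MeasureTheory Filter Set
open scoped ENNReal NNReal

noncomputable section

/-- The principal value integral statement `T^K_t f x = L`, i.e.
`lim_{ε→0⁺} ∫_{|x−y|≥ε} [f(x)−f(y)] K(t,x,y) dy = L`. -/
def HasPVIntegral (N : ℕ)
    (K : ℝ → EuclideanSpace ℝ (Fin N) → EuclideanSpace ℝ (Fin N) → ℝ) (t : ℝ)
    (f : EuclideanSpace ℝ (Fin N) → ℝ) (x : EuclideanSpace ℝ (Fin N)) (L : ℝ) : Prop :=
  Filter.Tendsto (fun ε : ℝ =>
      ∫ y in {y : EuclideanSpace ℝ (Fin N) | ε ≤ ‖x - y‖}, (f x - f y) * K t x y)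
    (nhdsWithin 0 (Set.Ioi 0)) (nhds L)

/-- The associated function `k(t,x,z) := K(t,x,x+z)·|z|^{N+α}`. -/
def kAssoc (N : ℕ) (α : ℝ)
    (K : ℝ → EuclideanSpace ℝ (Fin N) → EuclideanSpace ℝ (Fin N) → ℝ)
    (t : ℝ) (x z : EuclideanSpace ℝ (Fin N)) : ℝ :=
  K t x (x + z) * ‖z‖ ^ ((N : ℝ) + α)

/-- The vector-valued integral `∫_{S^{N−1}} g(σ)·σ dσ` over the unit sphere,
with respect to the (N−1)-dimensional Hausdorff (surface) measure. -/
def sphereVecInt (N : ℕ) (g : EuclideanSpace ℝ (Fin N) → ℝ) : EuclideanSpace ℝ (Fin N) :=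
  ∫ σ in Metric.sphere (0 : EuclideanSpace ℝ (Fin N)) 1, g σ • σ ∂(μH[(N : ℝ) - 1])

/-- The weak-(*)-kernel condition on the time interval `[0,T]` (with `T ∈ (0,∞]`). -/
structure WeakStarKernel (N : ℕ) (T : ℝ≥0∞)
    (K : ℝ → EuclideanSpace ℝ (Fin N) → EuclideanSpace ℝ (Fin N) → ℝ)
    (α : ℝ) (ζ : ℝ≥0∞) (ω Λ ν : ℝ) (s₀ : ℝ≥0∞) (τ : ℝ) : Prop where
  measurable : Measurable fun p : ℝ × EuclideanSpace ℝ (Fin N) × EuclideanSpace ℝ (Fin N) =>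
    K p.1 p.2.1 p.2.2
  nonneg : ∀ t x y, 0 ≤ K t x y
  symm : ∀ t x y, 0 ≤ t → ENNReal.ofReal t ≤ T → K t x y = K t y x
  lower : ∀ t x y, 0 ≤ t → ENNReal.ofReal t ≤ T → x ≠ y → ENNReal.ofReal ‖x - y‖ ≤ ζ →
    Λ⁻¹ ≤ K t x y * ‖x - y‖ ^ ((N : ℝ) + α)
  upper : ∀ t x y, 0 ≤ t → ENNReal.ofReal t ≤ T → x ≠ y →
    K t x y * ‖x - y‖ ^ ((N : ℝ) + α) ≤ Λ * (1 + ‖x - y‖ ^ ω)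
  cancel : 1 ≤ α → ∀ t x (s : ℝ), 0 ≤ t → ENNReal.ofReal t ≤ T → 0 < s →
    ENNReal.ofReal s < s₀ →
    ‖sphereVecInt N (fun σ => kAssoc N α K t x (s • σ))‖ ≤ τ * s ^ ν

/-- The (*)-kernel condition on the time interval `[0,T]` (with `T ∈ (0,∞]`):
as the weak condition, but with the local Hölder continuity of `k` replacing
the cancellation condition when `α ≥ 1`. -/
structure StarKernel (N : ℕ) (T : ℝ≥0∞)
    (K : ℝ → EuclideanSpace ℝ (Fin N) → EuclideanSpace ℝ (Fin N) → ℝ)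
    (α : ℝ) (ζ : ℝ≥0∞) (ω Λ ν : ℝ) (s₀ : ℝ≥0∞) (τ : ℝ) : Prop where
  measurable : Measurable fun p : ℝ × EuclideanSpace ℝ (Fin N) × EuclideanSpace ℝ (Fin N) =>
    K p.1 p.2.1 p.2.2
  nonneg : ∀ t x y, 0 ≤ K t x y
  symm : ∀ t x y, 0 ≤ t → ENNReal.ofReal t ≤ T → K t x y = K t y x
  lower : ∀ t x y, 0 ≤ t → ENNReal.ofReal t ≤ T → x ≠ y → ENNReal.ofReal ‖x - y‖ ≤ ζ →
    Λ⁻¹ ≤ K t x y * ‖x - y‖ ^ ((N : ℝ) + α)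
  upper : ∀ t x y, 0 ≤ t → ENNReal.ofReal t ≤ T → x ≠ y →
    K t x y * ‖x - y‖ ^ ((N : ℝ) + α) ≤ Λ * (1 + ‖x - y‖ ^ ω)
  holder : 1 ≤ α → ∀ t x z z', 0 ≤ t → ENNReal.ofReal t ≤ T →
    ENNReal.ofReal ‖z - z'‖ ≤ s₀ → ENNReal.ofReal ‖z‖ ≤ s₀ →
    |kAssoc N α K t x z - kAssoc N α K t x z'| ≤ τ * ‖z - z'‖ ^ ν

/-- `f : ℝ^N → F` together with all of its derivatives is smooth and bounded,
i.e. `f ∈ C^∞(overline{ℝ^N})`. -/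
def SmoothBounded {X F : Type*} [NormedAddCommGroup X] [NormedSpace ℝ X]
    [NormedAddCommGroup F] [NormedSpace ℝ F] (f : X → F) : Prop :=
  ContDiff ℝ (⊤ : ℕ∞) f ∧ ∀ n : ℕ, ∃ C : ℝ, ∀ x, ‖iteratedFDeriv ℝ n f x‖ ≤ C

/-- `sup_x ‖f x‖` as an extended real number (the `L^∞`-norm for continuous `f`). -/
def supENorm {X F : Type*} [NormedAddCommGroup F] (f : X → F) : ℝ≥0∞ :=
  ⨆ x, ENNReal.ofReal ‖f x‖

/-- The Hölder seminorm `[f]_{C^β} = sup_{x≠y} ‖f x − f y‖/‖x−y‖^β`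
as an extended real number. -/
def holderSemiENorm {X F : Type*} [NormedAddCommGroup X] [NormedAddCommGroup F]
    (β : ℝ) (f : X → F) : ℝ≥0∞ :=
  ⨆ x, ⨆ y, ENNReal.ofReal (‖f x - f y‖ / ‖x - y‖ ^ β)

/-- The Hölder norm `‖f‖_{C^β} = ‖f‖_{L^∞} + [f]_{C^β}` as an extended real number. -/
def holderENorm {X F : Type*} [NormedAddCommGroup X] [NormedAddCommGroup F]
    (β : ℝ) (f : X → F) : ℝ≥0∞ :=
  supENorm f + holderSemiENorm β f

/-- `w` is a (pointwise/classical) solution of `∂ₜ w + T^K_t(w(t,·)) = 0` on `[0,T)×ℝ^N`. -/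
def IsLinSolution (N : ℕ) (T : ℝ≥0∞)
    (K : ℝ → EuclideanSpace ℝ (Fin N) → EuclideanSpace ℝ (Fin N) → ℝ)
    (w : ℝ → EuclideanSpace ℝ (Fin N) → ℝ) : Prop :=
  ∀ t x, 0 ≤ t → ENNReal.ofReal t < T →
    ∃ L : ℝ, HasPVIntegral N K t (w t) x L ∧
      HasDerivWithinAt (fun s => w s x) (-L) (Set.Ici 0) t

/-- `w(t,x)` is smooth on `[0,T)×ℝ^N`. -/
def SmoothOnDomain (N : ℕ) (T : ℝ≥0∞) (w : ℝ → EuclideanSpace ℝ (Fin N) → ℝ) : Prop :=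
  ContDiffOn ℝ (⊤ : ℕ∞) (fun p : ℝ × EuclideanSpace ℝ (Fin N) => w p.1 p.2)
    {p : ℝ × EuclideanSpace ℝ (Fin N) | 0 ≤ p.1 ∧ ENNReal.ofReal p.1 < T}

/-- `w ∈ L^∞(0,T;(L¹∩L^∞)(ℝ^N))`. -/
def BddL1Linfty (N : ℕ) (T : ℝ≥0∞) (w : ℝ → EuclideanSpace ℝ (Fin N) → ℝ) : Prop :=
  ∃ C : ℝ, ∀ t, 0 ≤ t → ENNReal.ofReal t < T →
    (∫⁻ x, ENNReal.ofReal |w t x| ≤ ENNReal.ofReal C) ∧ ∀ x, |w t x| ≤ C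

/-- The class `𝒰_r` of test functions (for fixed constants `γ` and `A`). -/
def MemU (N : ℕ) (γ A : ℝ) (r : ℝ) (φ : EuclideanSpace ℝ (Fin N) → ℝ) : Prop :=
  Measurable φ ∧ Integrable φ ∧ (∫ x, φ x) = 0 ∧
    (∃ x₀ : EuclideanSpace ℝ (Fin N),
      ∫⁻ x, ENNReal.ofReal (|φ x| * ‖x - x₀‖ ^ γ) ≤ ENNReal.ofReal (r ^ γ)) ∧
    (∀ x, |φ x| ≤ A / r ^ (N : ℝ)) ∧ (∫⁻ x, ENNReal.ofReal |φ x|) ≤ 1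

/-- `φ` is (the restriction to `ℝ^N` of) a Schwartz function. -/
def IsSchwartz (N : ℕ) (φ : EuclideanSpace ℝ (Fin N) → ℝ) : Prop :=
  ∃ ψ : SchwartzMap (EuclideanSpace ℝ (Fin N)) ℝ, ⇑ψ = φ

/-- The volume of the unit ball in `ℝ^N`. -/
def ballVol (N : ℕ) : ℝ := (volume (Metric.ball (0 : EuclideanSpace ℝ (Fin N)) 1)).toReal

/-- The special radius `ζ₀ := max{(8/V_N)^{1/N}, 2·11^{1/γ}}`. -/
def zeta0 (N : ℕ) (γ : ℝ) : ℝ :=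
  max ((8 / ballVol N) ^ (N : ℝ)⁻¹) (2 * 11 ^ γ⁻¹)

/-! ### Hausdorff measure of the sphere -/

lemma norm_normalize_sub_le {E : Type*} [NormedAddCommGroup E] [NormedSpace ℝ E] {x y : E}
    (hx : 1 ≤ ‖x‖) (hy : 1 ≤ ‖y‖) : ‖‖x‖⁻¹ • x - ‖y‖⁻¹ • y‖ ≤ 2 * ‖x - y‖ := by
  have hx0 : 0 < ‖x‖ := by linarith
  have hy0 : 0 < ‖y‖ := by linarith
  have h1 : ‖x‖⁻¹ • x - ‖y‖⁻¹ • y = ‖x‖⁻¹ • (x - y) + (‖x‖⁻¹ - ‖y‖⁻¹) • y := by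
    module
  have h2 : ‖(‖x‖⁻¹ - ‖y‖⁻¹) • y‖ = ‖x‖⁻¹ * |‖y‖ - ‖x‖| := by
    rw [norm_smul, Real.norm_eq_abs, inv_sub_inv hx0.ne' hy0.ne', abs_div, abs_mul,
      abs_of_pos hx0, abs_of_pos hy0]
    field_simp
  have h3 : |‖y‖ - ‖x‖| ≤ ‖x - y‖ := by
    rw [abs_sub_comm]; exact abs_norm_sub_norm_le x y
  have h4 : ‖x‖⁻¹ ≤ 1 := inv_le_one_of_one_le₀ hx
  calc _ ≤ ‖‖x‖⁻¹ • (x - y)‖ + ‖(‖x‖⁻¹ - ‖y‖⁻¹) • y‖ := by rw [h1]; exact norm_add_le _ _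
    _ = ‖x‖⁻¹ * ‖x - y‖ + ‖x‖⁻¹ * |‖y‖ - ‖x‖| := by
      rw [h2, norm_smul, norm_inv, norm_norm]
    _ ≤ 1 * ‖x - y‖ + 1 * ‖x - y‖ := by gcongr
    _ = _ := by ring

lemma hausdorff_eq_volume (n : ℕ) : (μH[(n : ℝ)] : Measure (Fin n → ℝ)) = volume := by
  have := hausdorffMeasure_pi_real (ι := Fin n)
  simpa using this

/-- The face `{x_i = c}` of the cube `[-1,1]^{n+1}`, parametrised by `ℝ^n`. -/
def cubeFace (n : ℕ) (i : Fin (n + 1)) (c : ℝ) (y : Fin n → ℝ) : EuclideanSpace ℝ (Fin (n + 1)) :=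
  WithLp.toLp 2 (Fin.insertNth i c y : Fin (n + 1) → ℝ)

lemma cubeFace_lipschitz (n : ℕ) (i : Fin (n + 1)) (c : ℝ) :
    ∃ C : ℝ≥0, LipschitzWith C (cubeFace n i c) := by
  have h1 : LipschitzWith 1 (fun y : Fin n → ℝ => (Fin.insertNth i c y : Fin (n + 1) → ℝ)) := by
    refine LipschitzWith.of_dist_le_mul fun y z => ?_
    simp only [NNReal.coe_one, one_mul]
    refine (dist_pi_le_iff dist_nonneg).2 ?_
    rw [Fin.forall_iff_succAbove i]
    refine ⟨by simp, fun j => ?_⟩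
    simpa using dist_le_pi_dist y z j
  exact ⟨_, (PiLp.lipschitzWith_toLp 2 (fun _ : Fin (n + 1) => ℝ)).comp h1⟩

/-- The unit sphere is covered by the radial projections of the finitely many faces of the cube,
and radial projection is Lipschitz outside the unit ball. -/
lemma hausdorff_sphere_lt_top (n : ℕ) :
    μH[(n : ℝ)] (Metric.sphere (0 : EuclideanSpace ℝ (Fin (n + 1))) 1) < ∞ := by
  set R : EuclideanSpace ℝ (Fin (n + 1)) → EuclideanSpace ℝ (Fin (n + 1)) := fun z => ‖z‖⁻¹ • z
  have hface : ∀ (i : Fin (n + 1)) (c : ℝ) (y : Fin n → ℝ), |c| = 1 → 1 ≤ ‖cubeFace n i c y‖ := by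
    intro i c y hc
    have := PiLp.norm_apply_le (cubeFace n i c y) i
    simpa [cubeFace, hc] using this
  have hfin : ∀ (i : Fin (n + 1)) (c : ℝ), |c| = 1 →
      μH[(n : ℝ)] ((fun y => R (cubeFace n i c y)) '' Icc (-1) 1) < ∞ := by
    intro i c hc
    obtain ⟨C, hC⟩ := cubeFace_lipschitz n i c
    have hL : LipschitzWith (2 * C) (fun y => R (cubeFace n i c y)) := by
      refine LipschitzWith.of_dist_le_mul fun y z => ?_
      rw [dist_eq_norm]
      refine (norm_normalize_sub_le (hface i c y hc) (hface i c z hc)).trans ?_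
      have := hC.dist_le_mul y z
      rw [dist_eq_norm] at this
      push_cast
      linarith
    refine (hL.hausdorffMeasure_image_le (Nat.cast_nonneg n) _).trans_lt ?_
    rw [hausdorff_eq_volume]
    refine ENNReal.mul_lt_top (ENNReal.rpow_lt_top_of_nonneg (Nat.cast_nonneg n) ?_) ?_
    · exact ENNReal.coe_ne_top
    · exact isCompact_Icc.measure_lt_top
  have hcover : Metric.sphere (0 : EuclideanSpace ℝ (Fin (n + 1))) 1 ⊆
      ⋃ i : Fin (n + 1), ((fun y => R (cubeFace n i 1 y)) '' Icc (-1) 1) ∪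
        ((fun y => R (cubeFace n i (-1) y)) '' Icc (-1) 1) := by
    intro σ hσ
    have hσ1 : ‖σ‖ = 1 := by simpa using hσ
    obtain ⟨i, -, hi⟩ := Finset.exists_max_image Finset.univ (fun j => |σ j|) Finset.univ_nonempty
    set m := |σ i| with hm
    have hm0 : 0 < m := by
      rcases (abs_nonneg (σ i)).lt_or_eq with h | h
      · exact h
      · exfalso
        have : σ = 0 := by
          ext j
          have := hi j (Finset.mem_univ j)
          rw [← hm] at h
          have h' : |σ j| ≤ 0 := by linarith
          simpa using h'
        simp [this] at hσ1
    -- the point of the boundary of the cube on the ray through `σ`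
    set y : Fin n → ℝ := fun j => m⁻¹ * σ (i.succAbove j) with hy
    have hyI : y ∈ Icc (-1 : Fin n → ℝ) 1 := by
      have : ∀ j, |y j| ≤ 1 := by
        intro j
        rw [hy, abs_mul, abs_inv, abs_of_pos hm0, inv_mul_le_iff₀ hm0, mul_one]
        exact hi _ (Finset.mem_univ _)
      exact ⟨fun j => (abs_le.1 (this j)).1, fun j => (abs_le.1 (this j)).2⟩
    have hR : ∀ c, c = m⁻¹ * σ i → R (cubeFace n i c y) = σ := by
      intro c hc
      have h1 : cubeFace n i c y = m⁻¹ • σ := by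
        ext j
        revert j
        rw [Fin.forall_iff_succAbove i]
        refine ⟨by simp [cubeFace, hc], fun j => by simp [cubeFace, hy]⟩
      simp only [R, h1, norm_smul, hσ1, norm_inv, Real.norm_eq_abs, abs_of_pos hm0, mul_one,
        inv_inv, smul_smul]
      rw [mul_inv_cancel₀ hm0.ne', one_smul]
    refine mem_iUnion.2 ⟨i, ?_⟩
    rcases abs_choice (σ i) with h | h
    · left
      refine ⟨y, hyI, hR 1 ?_⟩
      rw [← h, ← hm, inv_mul_cancel₀ hm0.ne']
    · right
      refine ⟨y, hyI, hR (-1) ?_⟩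
      have : σ i = -m := by rw [hm, h]; ring
      rw [this]; field_simp
  refine (measure_mono hcover).trans_lt ?_
  refine (measure_iUnion_le _).trans_lt ?_
  rw [tsum_fintype]
  refine ENNReal.sum_lt_top.2 fun i _ => ?_
  exact (measure_union_le _ _).trans_lt (ENNReal.add_lt_top.2 ⟨hfin i 1 (by simp), hfin i (-1) (by simp)⟩)

/-- Forgetting the first coordinate is `1`-Lipschitz and maps the sphere onto a set that contains
a cube of `ℝ^n`. -/
lemma hausdorff_sphere_pos (n : ℕ) :
    0 < μH[(n : ℝ)] (Metric.sphere (0 : EuclideanSpace ℝ (Fin (n + 1))) 1) := by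
  set P : EuclideanSpace ℝ (Fin (n + 1)) → (Fin n → ℝ) := fun z j => z j.succ
  have hP : LipschitzWith 1 P := by
    refine LipschitzWith.of_dist_le_mul fun y z => ?_
    simp only [NNReal.coe_one, one_mul]
    refine (dist_pi_le_iff dist_nonneg).2 fun j => ?_
    have := PiLp.norm_apply_le (y - z) j.succ
    simpa [P, dist_eq_norm] using this
  set r : ℝ := ((n : ℝ) + 1)⁻¹
  have hr : 0 < r := by positivity
  have hr1 : r ≤ 1 := inv_le_one_of_one_le₀ (by simp)
  have hsub : Metric.ball (0 : Fin n → ℝ) r ⊆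
      P '' Metric.sphere (0 : EuclideanSpace ℝ (Fin (n + 1))) 1 := by
    intro y hy
    have hyj : ∀ j, y j ^ 2 ≤ r := by
      intro j
      have h1 : |y j| ≤ r := by
        have := norm_le_pi_norm y j
        have h2 : ‖y‖ < r := by simpa using hy
        rw [Real.norm_eq_abs] at this
        linarith
      have h0 := abs_nonneg (y j)
      rw [← sq_abs]
      nlinarith
    have hs : ∑ j, y j ^ 2 ≤ 1 := by
      calc ∑ j, y j ^ 2 ≤ ∑ _j : Fin n, r := Finset.sum_le_sum fun j _ => hyj j
        _ = n * r := by simp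
        _ ≤ (n + 1) * r := by gcongr; linarith
        _ = 1 := by simp only [r]; field_simp
    refine ⟨WithLp.toLp 2 (Fin.cons (Real.sqrt (1 - ∑ j, y j ^ 2)) y : Fin (n + 1) → ℝ), ?_, ?_⟩
    · rw [mem_sphere_zero_iff_norm, EuclideanSpace.norm_eq, Real.sqrt_eq_one, Fin.sum_univ_succ]
      simp only [Fin.cons_zero, Fin.cons_succ, Real.norm_eq_abs, sq_abs]
      rw [Real.sq_sqrt (by linarith)]
      ring
    · ext j
      simp [P]
  have h1 : 0 < volume (Metric.ball (0 : Fin n → ℝ) r) := Metric.measure_ball_pos _ _ hr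
  have h2 := hP.hausdorffMeasure_image_le (Nat.cast_nonneg n)
    (Metric.sphere (0 : EuclideanSpace ℝ (Fin (n + 1))) 1)
  rw [hausdorff_eq_volume] at h2
  simp only [ENNReal.coe_one, ENNReal.one_rpow, one_mul] at h2
  exact h1.trans_le ((measure_mono hsub).trans h2)

/-! ### Rotation invariant measures on the sphere -/

/-- Two finite rotation invariant measures carried by the unit sphere have proportional
characteristic functions. The value `∫ e^{i s⟨x, y⟩} dμ(x)` does not depend on the choice of the unit vector `y`, so that
integrating the symmetric expression `e^{i s⟨x, y⟩}` in both variables gives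
`ν(S) · charFun μ = μ(S) · charFun ν`. -/
lemma charFun_proportional {E : Type*} [NormedAddCommGroup E] [InnerProductSpace ℝ E]
    [MeasurableSpace E] [BorelSpace E] [SecondCountableTopology E]
    (μ ν : Measure E) [IsFiniteMeasure μ] [IsFiniteMeasure ν]
    (hμ : ∀ e : E ≃ₗᵢ[ℝ] E, μ.map e = μ) (hν : ∀ e : E ≃ₗᵢ[ℝ] E, ν.map e = ν)
    (hμS : ∀ᵐ x ∂μ, ‖x‖ = 1) (hνS : ∀ᵐ x ∂ν, ‖x‖ = 1) (ξ : E) :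
    (ν.real univ : ℂ) * charFun μ ξ = (μ.real univ : ℂ) * charFun ν ξ := by
  have key : ∀ (ρ : Measure E) [IsFiniteMeasure ρ], (∀ e : E ≃ₗᵢ[ℝ] E, ρ.map e = ρ) →
      ∀ a b : E, ‖a‖ = ‖b‖ → charFun ρ a = charFun ρ b := by
    intro ρ _ hρ a b hab
    set e := Submodule.reflection (ℝ ∙ (a - b))ᗮ
    have he : e a = b := Submodule.reflection_sub hab
    rw [charFun_apply, charFun_apply]
    conv_rhs => rw [← hρ e]
    rw [integral_map e.continuous.measurable.aemeasurable (by fun_prop)]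
    simp_rw [← he, LinearIsometryEquiv.inner_map_map]
  set s : ℝ := ‖ξ‖
  have hint : Integrable (Function.uncurry fun x y : E =>
      Complex.exp (((s * inner ℝ x y : ℝ) : ℂ) * Complex.I)) (μ.prod ν) := by
    refine Integrable.of_bound (C := 1) (by fun_prop) (.of_forall fun p => ?_)
    rw [Function.uncurry, Complex.norm_exp_ofReal_mul_I]
  have hswap := integral_integral_swap hint
  have h1 : ∀ᵐ x ∂μ, ∫ y, Complex.exp (((s * inner ℝ x y : ℝ) : ℂ) * Complex.I) ∂ν
      = charFun ν ξ := by
    filter_upwards [hμS] with x hx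
    rw [key ν hν ξ (s • x) (by simp [norm_smul, hx, s]), charFun_apply]
    simp_rw [inner_smul_right, real_inner_comm x]
  have h2 : ∀ᵐ y ∂ν, ∫ x, Complex.exp (((s * inner ℝ x y : ℝ) : ℂ) * Complex.I) ∂μ
      = charFun μ ξ := by
    filter_upwards [hνS] with x hx
    rw [key μ hμ ξ (s • x) (by simp [norm_smul, hx, s]), charFun_apply]
    simp_rw [inner_smul_right]
  rw [integral_congr_ae h1, integral_congr_ae h2] at hswap
  simpa using hswap.symm

lemma invariant_proportional {E : Type*} [NormedAddCommGroup E] [InnerProductSpace ℝ E]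
    [MeasurableSpace E] [BorelSpace E] [SecondCountableTopology E] [CompleteSpace E]
    (μ ν : Measure E) [IsFiniteMeasure μ] [IsFiniteMeasure ν]
    (hμ : ∀ e : E ≃ₗᵢ[ℝ] E, μ.map e = μ) (hν : ∀ e : E ≃ₗᵢ[ℝ] E, ν.map e = ν)
    (hμS : ∀ᵐ x ∂μ, ‖x‖ = 1) (hνS : ∀ᵐ x ∂ν, ‖x‖ = 1) :
    ν univ • μ = μ univ • ν := by
  have : IsFiniteMeasure (ν univ • μ) := Measure.smul_finite _ (measure_ne_top _ _)
  have : IsFiniteMeasure (μ univ • ν) := Measure.smul_finite _ (measure_ne_top _ _)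
  refine Measure.ext_of_charFun ?_
  ext ξ
  have := charFun_proportional μ ν hμ hν hμS hνS ξ
  rw [charFun_apply, charFun_apply, integral_smul_measure, integral_smul_measure,
    ← charFun_apply, ← charFun_apply, Complex.real_smul, Complex.real_smul]
  exact this

lemma toSphere_map_invariant {E : Type*} [NormedAddCommGroup E] [InnerProductSpace ℝ E]
    [MeasurableSpace E] [BorelSpace E] [FiniteDimensional ℝ E] (e : E ≃ₗᵢ[ℝ] E) :
    (((volume : Measure E).toSphere).map (Subtype.val : Metric.sphere (0 : E) 1 → E)).map e =
      ((volume : Measure E).toSphere).map Subtype.val := by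
  ext A hA
  have he : Measurable e := e.continuous.measurable
  have hA' : MeasurableSet (e ⁻¹' A) := he hA
  rw [Measure.map_apply he hA, Measure.map_apply measurable_subtype_coe hA',
    Measure.map_apply measurable_subtype_coe hA,
    Measure.toSphere_apply' _ (measurable_subtype_coe hA'),
    Measure.toSphere_apply' _ (measurable_subtype_coe hA)]
  congr 1
  conv_rhs => rw [← e.measurePreserving.measure_preimage_equiv (f := e.toMeasurableEquiv)]
  congr 1
  ext z
  simp only [Set.mem_smul, mem_image, mem_preimage]
  constructor
  · rintro ⟨s, hs, _, ⟨σ, hσ, rfl⟩, rfl⟩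
    exact ⟨s, hs, e σ, ⟨⟨e σ, by simp⟩, hσ, rfl⟩, by simp⟩
  · rintro ⟨s, hs, _, ⟨σ, hσ, rfl⟩, h⟩
    refine ⟨s, hs, e.symm σ, ⟨⟨e.symm σ, by simp⟩, by simpa using hσ, rfl⟩, ?_⟩
    apply e.injective
    simpa using h

/-- The surface measure underlying polar coordinates is a finite multiple of the
Hausdorff measure on the sphere. -/
lemma exists_toSphere_eq_hausdorff (N : ℕ) (hN : 1 ≤ N) :
    ∃ c : ℝ≥0∞, c ≠ ∞ ∧
      ((volume : Measure (EuclideanSpace ℝ (Fin N))).toSphere).map Subtype.val =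
        c • (μH[(N : ℝ) - 1]).restrict (Metric.sphere (0 : EuclideanSpace ℝ (Fin N)) 1) := by
  obtain ⟨n, rfl⟩ : ∃ n, N = n + 1 := ⟨N - 1, by omega⟩
  have hn : ((n + 1 : ℕ) : ℝ) - 1 = n := by push_cast; ring
  rw [hn]
  set S := Metric.sphere (0 : EuclideanSpace ℝ (Fin (n + 1))) 1
  have hSm : MeasurableSet S := Metric.isClosed_sphere.measurableSet
  set μ : Measure (EuclideanSpace ℝ (Fin (n + 1))) :=
    ((volume : Measure (EuclideanSpace ℝ (Fin (n + 1)))).toSphere).map Subtype.val with hμdef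
  set ν : Measure (EuclideanSpace ℝ (Fin (n + 1))) := (μH[(n : ℝ)]).restrict S with hνdef
  have hνu : ν univ = μH[(n : ℝ)] S := by simp [hνdef]
  have : IsFiniteMeasure ν := ⟨by rw [hνu]; exact hausdorff_sphere_lt_top n⟩
  have hprop : ν univ • μ = μ univ • ν := by
    refine invariant_proportional μ ν toSphere_map_invariant ?_ ?_ ?_
    · intro e
      have h1 := (e.toIsometryEquiv.measurePreserving_hausdorffMeasure (n : ℝ)).restrict_preimage hSm
      have h2 : e.toIsometryEquiv ⁻¹' S = S := by ext z; simp [S]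
      rw [h2] at h1
      exact h1.map_eq
    · rw [ae_map_iff measurable_subtype_coe.aemeasurable (measurableSet_eq_fun (by fun_prop) (by fun_prop))]
      exact .of_forall fun σ => by simp
    · filter_upwards [ae_restrict_mem hSm] with z hz
      simpa [S] using hz
  have hν0 : ν univ ≠ 0 := by rw [hνu]; exact (hausdorff_sphere_pos n).ne'
  refine ⟨(ν univ)⁻¹ * μ univ, ENNReal.mul_ne_top (ENNReal.inv_ne_top.2 hν0) (measure_ne_top _ _), ?_⟩
  rw [mul_smul, ← hprop, smul_smul, ENNReal.inv_mul_cancel hν0 (measure_ne_top _ _), one_smul]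

/-! ### Polar coordinates, truncation, the Taylor estimate and radial powers -/

lemma integral_polar {E F : Type*} [NormedAddCommGroup E] [InnerProductSpace ℝ E]
    [MeasurableSpace E] [BorelSpace E] [FiniteDimensional ℝ E] [Nontrivial E]
    [NormedAddCommGroup F] [NormedSpace ℝ F] (G : E → F) (hG : Integrable G) :
    ∫ z, G z = ∫ s in Ioi (0 : ℝ), s ^ (Module.finrank ℝ E - 1) •
      ∫ σ, G (s • (σ : E)) ∂(volume : Measure E).toSphere := by
  set μ : Measure E := volume
  set g : Metric.sphere (0 : E) 1 × Ioi (0 : ℝ) → F := fun p => G (p.2.1 • p.1.1) with hg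
  have hgc : ∀ z : ({0}ᶜ : Set E), g (homeomorphUnitSphereProd E z) = G z := by
    intro z
    have hz : ‖(z : E)‖ ≠ 0 := norm_ne_zero_iff.2 z.2
    simp [hg, smul_smul, hz]
  have hmp := μ.measurePreserving_homeomorphUnitSphereProd
  have hemb := (homeomorphUnitSphereProd E).measurableEmbedding
  have hms : MeasurableSet ({0}ᶜ : Set E) := (measurableSet_singleton _).compl
  have hint : Integrable g (μ.toSphere.prod (.volumeIoiPow (Module.finrank ℝ E - 1))) := by
    rw [← hmp.integrable_comp_emb hemb]
    have : g ∘ homeomorphUnitSphereProd E = G ∘ Subtype.val := funext hgc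
    rw [this, ← integrableOn_iff_comap_subtypeVal hms]
    exact hG.integrableOn
  calc ∫ z, G z ∂μ = ∫ z : ({0}ᶜ : Set E), G z ∂(μ.comap (↑)) := by
        rw [integral_subtype_comap hms G, restrict_compl_singleton]
    _ = ∫ p, g p ∂μ.toSphere.prod (.volumeIoiPow (Module.finrank ℝ E - 1)) := by
        rw [← hmp.integral_comp hemb]
        exact integral_congr_ae (.of_forall fun z => (hgc z).symm)
    _ = ∫ s : Ioi (0 : ℝ), ∫ σ, G (s.1 • (σ : E)) ∂μ.toSphere
          ∂.volumeIoiPow (Module.finrank ℝ E - 1) := integral_prod_symm _ hint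
    _ = _ := by
      simp only [Measure.volumeIoiPow, ENNReal.ofReal]
      rw [integral_withDensity_eq_integral_smul,
        integral_subtype_comap measurableSet_Ioi fun a : ℝ ↦
          Real.toNNReal (a ^ (Module.finrank ℝ E - 1)) • ∫ σ, G (a • (σ : E)) ∂μ.toSphere,
        setIntegral_congr_fun measurableSet_Ioi fun x hx ↦ ?_]
      · rw [NNReal.smul_def, Real.coe_toNNReal _ (pow_nonneg hx.out.le _)]
      · exact (measurable_subtype_coe.pow_const _).real_toNNReal

/-- Truncating an integrable function away from the zero set of `ρ`, which is negligible,
does not change its integral in the limit. -/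
lemma tendsto_trunc {X F : Type*} [MeasurableSpace X] [NormedAddCommGroup F] [NormedSpace ℝ F]
    (μ : Measure X) (ρ : X → ℝ) (hρ : Measurable ρ) (hpos : ∀ᵐ z ∂μ, 0 < ρ z)
    (g : X → F) (hg : Integrable g μ) :
    Tendsto (fun ε : ℝ => ∫ z in {z | ε ≤ ρ z}, g z ∂μ) (nhdsWithin 0 (Ioi 0))
      (nhds (∫ z, g z ∂μ)) := by
  have hm : ∀ ε : ℝ, MeasurableSet {z | ε ≤ ρ z} := fun ε => measurableSet_le measurable_const hρ
  simp_rw [← integral_indicator (hm _)]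
  refine tendsto_integral_filter_of_dominated_convergence (fun z => ‖g z‖) ?_ ?_ hg.norm ?_
  · exact .of_forall fun ε => hg.aestronglyMeasurable.indicator (hm ε)
  · exact .of_forall fun ε => .of_forall fun z => norm_indicator_le_norm_self _ _
  · filter_upwards [hpos] with z hz
    refine tendsto_const_nhds.congr' ?_
    filter_upwards [Ioo_mem_nhdsGT hz] with ε hε
    rw [indicator_of_mem]
    exact hε.2.le

/-- Second order Taylor estimate with the Hessian bounded on the closed unit ball. -/
lemma taylor_two {E : Type*} [NormedAddCommGroup E] [NormedSpace ℝ E] [FiniteDimensional ℝ E]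
    (f : E → ℝ) (hf : ContDiff ℝ 2 f) (x z : E) (hz : ‖z‖ ≤ 1) :
    |f (x + z) - f x - fderiv ℝ f x z| ≤
      sSup ((fun y => ‖iteratedFDeriv ℝ 2 f y‖) '' Metric.closedBall x 1) * ‖z‖ ^ 2 := by
  set M := sSup ((fun y => ‖iteratedFDeriv ℝ 2 f y‖) '' Metric.closedBall x 1)
  have hM : ∀ y ∈ Metric.closedBall x 1, ‖fderiv ℝ (fderiv ℝ f) y‖ ≤ M := by
    intro y hy
    rw [← norm_iteratedFDeriv_one, norm_iteratedFDeriv_fderiv]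
    refine le_csSup ?_ ⟨y, hy, rfl⟩
    exact ((isCompact_closedBall x 1).image (hf.continuous_iteratedFDeriv le_rfl).norm).bddAbove
  have hd1 : Differentiable ℝ f := hf.differentiable (by norm_num)
  have hd2 : Differentiable ℝ (fderiv ℝ f) :=
    (hf.fderiv_right (m := 1) (by norm_num)).differentiable (by norm_num)
  have hx1 : x ∈ Metric.closedBall x 1 := by simp
  have h1 : ∀ y ∈ Metric.closedBall x ‖z‖, ‖fderiv ℝ f y - fderiv ℝ f x‖ ≤ M * ‖z‖ := by
    intro y hy
    have hy1 : y ∈ Metric.closedBall x 1 := Metric.closedBall_subset_closedBall hz hy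
    have h := (convex_closedBall x 1).norm_image_sub_le_of_norm_fderiv_le (𝕜 := ℝ)
      (fun w _ => hd2 w) hM hx1 hy1
    have hM0 : 0 ≤ M := (norm_nonneg (fderiv ℝ (fderiv ℝ f) x)).trans (hM x hx1)
    refine h.trans ?_
    gcongr
    simpa [dist_eq_norm] using hy
  have h := (convex_closedBall x ‖z‖).norm_image_sub_le_of_norm_fderiv_le' (𝕜 := ℝ)
      (fun w _ => hd1 w) h1 (x := x) (y := x + z) (by simp) (by simp)
  rw [add_sub_cancel_left, Real.norm_eq_abs] at h
  exact h.trans_eq (by ring)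

lemma integrableOn_ball_norm_rpow (N : ℕ) (hN : 1 ≤ N) (r p : ℝ) (hp : -(N : ℝ) < p) :
    IntegrableOn (fun z : EuclideanSpace ℝ (Fin N) => ‖z‖ ^ p) (Metric.ball 0 r) := by
  have : Nonempty (Fin N) := ⟨⟨0, hN⟩⟩
  rw [integrableOn_fun_norm_addHaar volume (f := fun s : ℝ => s ^ p)]
  rw [finrank_euclideanSpace_fin]
  refine IntegrableOn.congr_fun (f := fun s : ℝ => s ^ ((N : ℝ) - 1 + p)) ?_ ?_ measurableSet_Ioo
  · exact (integrableOn_Ioc_iff_integrableOn_Ioo).1 <|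
      (intervalIntegral.intervalIntegrable_rpow' (a := 0) (b := r) (by linarith)).1
  · intro s hs
    simp only [smul_eq_mul]
    rw [Real.rpow_add hs.1, ← Real.rpow_natCast, Nat.cast_sub hN, Nat.cast_one]

lemma integrableOn_compl_ball_norm_rpow (N : ℕ) (hN : 1 ≤ N) (r p : ℝ) (hr : 0 < r)
    (hp : p < -(N : ℝ)) :
    IntegrableOn (fun z : EuclideanSpace ℝ (Fin N) => ‖z‖ ^ p) (Metric.ball 0 r)ᶜ := by
  have : Nonempty (Fin N) := ⟨⟨0, hN⟩⟩
  rw [← integrable_indicator_iff measurableSet_ball.compl]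
  have h1 : (Metric.ball (0 : EuclideanSpace ℝ (Fin N)) r)ᶜ.indicator (fun z => ‖z‖ ^ p) =
      fun z => ((Ici r).indicator fun s : ℝ => s ^ p) ‖z‖ := by
    ext z
    by_cases h : r ≤ ‖z‖ <;> simp [indicator, h]
  rw [h1, integrable_fun_norm_addHaar volume (f := (Ici r).indicator fun s : ℝ => s ^ p),
    finrank_euclideanSpace_fin]
  have h2 : IntegrableOn (fun s : ℝ => s ^ ((N : ℝ) - 1 + p)) (Ici r) := by
    rw [integrableOn_Ici_iff_integrableOn_Ioi]
    exact integrableOn_Ioi_rpow_of_lt (by linarith) hr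
  rw [← integrable_indicator_iff measurableSet_Ici] at h2
  refine (h2.integrableOn (s := Ioi 0)).congr_fun ?_ measurableSet_Ioi
  intro s hs
  by_cases h : r ≤ s
  · simp only [mem_Ici, h, indicator_of_mem, smul_eq_mul]
    rw [Real.rpow_add hs, ← Real.rpow_natCast, Nat.cast_sub hN, Nat.cast_one]
  · simp [h]

/-! ### Estimates for the pieces of the singular integral -/

/-- The majorant `Λ(|z|^{-N-α} + |z|^{ω-N-α})` of the kernel `z ↦ K(t, x, x + z)`. -/
def kernelMaj (N : ℕ) (α ω Λ : ℝ) (z : EuclideanSpace ℝ (Fin N)) : ℝ :=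
  Λ * (‖z‖ ^ (-((N : ℝ) + α)) + ‖z‖ ^ (ω - ((N : ℝ) + α)))

lemma kernelMaj_le_of_le (N : ℕ) {α ω Λ r : ℝ} (hα0 : 0 < α) (hωα : ω < α) (hΛ : 1 ≤ Λ)
    (hr : 0 < r) (z : EuclideanSpace ℝ (Fin N)) (hz : r ≤ ‖z‖) :
    kernelMaj N α ω Λ z ≤ Λ * (r ^ (-((N : ℝ) + α)) + r ^ (ω - ((N : ℝ) + α))) := by
  have hN0 : (0 : ℝ) ≤ N := Nat.cast_nonneg N
  unfold kernelMaj
  gcongr ?_ * (?_ + ?_)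
  · exact Real.rpow_le_rpow_of_nonpos hr hz (by linarith)
  · exact Real.rpow_le_rpow_of_nonpos hr hz (by linarith)

lemma kernelMaj_le_near (N : ℕ) {α ω Λ : ℝ} (hω0 : 0 ≤ ω) (hΛ : 1 ≤ Λ)
    (z : EuclideanSpace ℝ (Fin N)) (hz0 : z ≠ 0) (hz : ‖z‖ ≤ 1) :
    kernelMaj N α ω Λ z ≤ 2 * Λ * ‖z‖ ^ (-((N : ℝ) + α)) := by
  have h0 : 0 < ‖z‖ := norm_pos_iff.2 hz0
  have : ‖z‖ ^ (ω - ((N : ℝ) + α)) ≤ ‖z‖ ^ (-((N : ℝ) + α)) :=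
    Real.rpow_le_rpow_of_exponent_ge h0 hz (by linarith)
  unfold kernelMaj
  nlinarith

lemma integrableOn_kernelMaj (N : ℕ) (hN : 1 ≤ N) {α ω Λ r : ℝ} (hα0 : 0 < α) (hωα : ω < α)
    (hr : 0 < r) : IntegrableOn (kernelMaj N α ω Λ) (Metric.ball 0 r)ᶜ := by
  unfold kernelMaj
  exact ((integrableOn_compl_ball_norm_rpow N hN r _ hr (by linarith)).add
    (integrableOn_compl_ball_norm_rpow N hN r _ hr (by linarith))).const_mul Λ

lemma ae_ne_zero (N : ℕ) (hN : 1 ≤ N) (s : Set (EuclideanSpace ℝ (Fin N))) :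
    ∀ᵐ z ∂(volume.restrict s), z ≠ 0 := by
  have : Nonempty (Fin N) := ⟨⟨0, hN⟩⟩
  have h : ∀ᵐ z : EuclideanSpace ℝ (Fin N), z ≠ 0 := by
    simp [ae_iff]
  exact ae_restrict_of_ae h

lemma far_integrable (N : ℕ) (hN : 1 ≤ N) {α ω Λ r : ℝ} (hα0 : 0 < α) (hωα : ω < α) (hΛ : 1 ≤ Λ)
    (hr : 0 < r) (κ : EuclideanSpace ℝ (Fin N) → ℝ) (hκm : Measurable κ) (hκ0 : ∀ z, 0 ≤ κ z)
    (hκ : ∀ z, z ≠ 0 → κ z ≤ kernelMaj N α ω Λ z)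
    (f : EuclideanSpace ℝ (Fin N) → ℝ) (hf : Continuous f) (hfi : Integrable f)
    (x : EuclideanSpace ℝ (Fin N)) :
    IntegrableOn (fun z => (f x - f (x + z)) * κ z) (Metric.ball 0 r)ᶜ ∧
    |∫ z in (Metric.ball 0 r)ᶜ, (f x - f (x + z)) * κ z| ≤
      (∫ z in (Metric.ball 0 r)ᶜ, kernelMaj N α ω Λ z) * |f x| +
        Λ * (r ^ (-((N : ℝ) + α)) + r ^ (ω - ((N : ℝ) + α))) * ∫ y, |f y| := by
  set m := Λ * (r ^ (-((N : ℝ) + α)) + r ^ (ω - ((N : ℝ) + α))) with hm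
  have hm0 : 0 ≤ m := by positivity
  have hfx : Integrable (fun z => |f (x + z)|) := (hfi.comp_add_left x).abs
  have hb1 : IntegrableOn (fun z => kernelMaj N α ω Λ z * |f x|) (Metric.ball 0 r)ᶜ :=
    (integrableOn_kernelMaj N hN hα0 hωα hr).mul_const _
  have hb2 : IntegrableOn (fun z => m * |f (x + z)|) (Metric.ball 0 r)ᶜ :=
    (hfx.const_mul m).integrableOn
  have hle : ∀ᵐ z ∂(volume.restrict (Metric.ball (0 : EuclideanSpace ℝ (Fin N)) r)ᶜ),
      ‖(f x - f (x + z)) * κ z‖ ≤ kernelMaj N α ω Λ z * |f x| + m * |f (x + z)| := by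
    filter_upwards [ae_restrict_mem measurableSet_ball.compl] with z hz
    have hz : r ≤ ‖z‖ := by simpa using hz
    have hz0 : z ≠ 0 := norm_pos_iff.1 (hr.trans_le hz)
    have h1 := hκ z hz0
    have h2 := h1.trans (kernelMaj_le_of_le N hα0 hωα hΛ hr z hz)
    rw [Real.norm_eq_abs, abs_mul, abs_of_nonneg (hκ0 z)]
    calc |f x - f (x + z)| * κ z ≤ (|f x| + |f (x + z)|) * κ z :=
          mul_le_mul_of_nonneg_right (abs_sub _ _) (hκ0 z)
      _ = κ z * |f x| + κ z * |f (x + z)| := by ring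
      _ ≤ _ := by gcongr
  have hmeas : AEStronglyMeasurable (fun z => (f x - f (x + z)) * κ z)
      (volume.restrict (Metric.ball (0 : EuclideanSpace ℝ (Fin N)) r)ᶜ) := by
    have : Measurable f := hf.measurable
    exact Measurable.aestronglyMeasurable (by fun_prop)
  refine ⟨(hb1.add hb2).mono' hmeas hle, ?_⟩
  rw [← Real.norm_eq_abs]
  refine (norm_integral_le_of_norm_le (hb1.add hb2) hle).trans ?_
  simp only [Pi.add_apply]
  rw [integral_add hb1 hb2, integral_mul_const, integral_const_mul]
  gcongr
  calc ∫ z in (Metric.ball 0 r)ᶜ, |f (x + z)| ≤ ∫ z, |f (x + z)| :=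
        setIntegral_le_integral hfx (.of_forall fun z => abs_nonneg _)
    _ = ∫ y, |f y| := integral_add_left_eq_self (fun y => |f y|) x

lemma near_integrable (N : ℕ) (hN : 1 ≤ N) {α ω Λ r : ℝ} (hα2 : α < 2)
    (hω0 : 0 ≤ ω) (hΛ : 1 ≤ Λ)
    (hr1 : r ≤ 1) (κ : EuclideanSpace ℝ (Fin N) → ℝ) (hκm : Measurable κ)
    (hκ0 : ∀ z, 0 ≤ κ z) (hκ : ∀ z, z ≠ 0 → κ z ≤ kernelMaj N α ω Λ z)
    (f : EuclideanSpace ℝ (Fin N) → ℝ) (hf : ContDiff ℝ 2 f)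
    (x : EuclideanSpace ℝ (Fin N)) :
    IntegrableOn (fun z => (f x - f (x + z) + fderiv ℝ f x z) * κ z) (Metric.ball 0 r) ∧
    |∫ z in Metric.ball 0 r, (f x - f (x + z) + fderiv ℝ f x z) * κ z| ≤
      (∫ z in Metric.ball (0 : EuclideanSpace ℝ (Fin N)) r, 2 * Λ * ‖z‖ ^ (2 - ((N : ℝ) + α))) *
        sSup ((fun y => ‖iteratedFDeriv ℝ 2 f y‖) '' Metric.closedBall x 1) := by
  set M := sSup ((fun y => ‖iteratedFDeriv ℝ 2 f y‖) '' Metric.closedBall x 1) with hM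
  have hM0 : 0 ≤ M := by
    refine Real.sSup_nonneg ?_
    rintro _ ⟨y, -, rfl⟩
    exact norm_nonneg _
  have hb : IntegrableOn (fun z : EuclideanSpace ℝ (Fin N) =>
      2 * Λ * ‖z‖ ^ (2 - ((N : ℝ) + α)) * M) (Metric.ball 0 r) :=
    ((integrableOn_ball_norm_rpow N hN r _ (by linarith)).const_mul _).mul_const _
  have hle : ∀ᵐ z ∂(volume.restrict (Metric.ball (0 : EuclideanSpace ℝ (Fin N)) r)),
      ‖(f x - f (x + z) + fderiv ℝ f x z) * κ z‖ ≤ 2 * Λ * ‖z‖ ^ (2 - ((N : ℝ) + α)) * M := by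
    filter_upwards [ae_restrict_mem measurableSet_ball, ae_ne_zero N hN _] with z hz hz0
    have hz : ‖z‖ < r := by simpa using hz
    have hz1 : ‖z‖ ≤ 1 := hz.le.trans hr1
    have h0 : 0 < ‖z‖ := norm_pos_iff.2 hz0
    have h1 := (hκ z hz0).trans (kernelMaj_le_near N hω0 hΛ z hz0 hz1)
    have h2 := taylor_two f hf x z hz1
    have h3 : |f x - f (x + z) + fderiv ℝ f x z| ≤ M * ‖z‖ ^ 2 := by
      rw [← abs_neg]
      convert h2 using 2
      ring
    have h4 : ‖z‖ ^ (2 - ((N : ℝ) + α)) = ‖z‖ ^ 2 * ‖z‖ ^ (-((N : ℝ) + α)) := by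
      rw [sub_eq_add_neg, Real.rpow_add h0, Real.rpow_two]
    rw [Real.norm_eq_abs, abs_mul, abs_of_nonneg (hκ0 z), h4]
    calc _ ≤ (M * ‖z‖ ^ 2) * (2 * Λ * ‖z‖ ^ (-((N : ℝ) + α))) :=
          mul_le_mul h3 h1 (hκ0 z) (by positivity)
      _ = _ := by ring
  have hmeas : AEStronglyMeasurable (fun z => (f x - f (x + z) + fderiv ℝ f x z) * κ z)
      (volume.restrict (Metric.ball (0 : EuclideanSpace ℝ (Fin N)) r)) := by
    have : Measurable f := hf.continuous.measurable
    exact Measurable.aestronglyMeasurable (by fun_prop)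
  refine ⟨hb.mono' hmeas hle, ?_⟩
  rw [← Real.norm_eq_abs, ← integral_mul_const]
  exact norm_integral_le_of_norm_le hb hle

/-- For `α < 1` the first moment of the kernel converges absolutely at the origin. -/
lemma drift_subcritical (N : ℕ) (hN : 1 ≤ N) {α ω Λ r : ℝ} (hα1 : α < 1)
    (hω0 : 0 ≤ ω) (hΛ : 1 ≤ Λ)
    (hr1 : r ≤ 1) (κ : EuclideanSpace ℝ (Fin N) → ℝ) (hκm : Measurable κ)
    (hκ0 : ∀ z, 0 ≤ κ z) (hκ : ∀ z, z ≠ 0 → κ z ≤ kernelMaj N α ω Λ z) :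
    ∃ w : EuclideanSpace ℝ (Fin N), Tendsto (fun ε : ℝ =>
        ∫ z in {z | ε ≤ ‖z‖}, κ z • z ∂(volume.restrict (Metric.ball 0 r)))
        (nhdsWithin 0 (Ioi 0)) (nhds w) ∧
      ‖w‖ ≤ ∫ z in Metric.ball (0 : EuclideanSpace ℝ (Fin N)) r,
        2 * Λ * ‖z‖ ^ (1 - ((N : ℝ) + α)) := by
  have hb : IntegrableOn (fun z : EuclideanSpace ℝ (Fin N) =>
      2 * Λ * ‖z‖ ^ (1 - ((N : ℝ) + α))) (Metric.ball 0 r) :=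
    (integrableOn_ball_norm_rpow N hN r _ (by linarith)).const_mul _
  have hle : ∀ᵐ z ∂(volume.restrict (Metric.ball (0 : EuclideanSpace ℝ (Fin N)) r)),
      ‖κ z • z‖ ≤ 2 * Λ * ‖z‖ ^ (1 - ((N : ℝ) + α)) := by
    filter_upwards [ae_restrict_mem measurableSet_ball, ae_ne_zero N hN _] with z hz hz0
    have hz : ‖z‖ < r := by simpa using hz
    have h0 : 0 < ‖z‖ := norm_pos_iff.2 hz0
    have h1 := (hκ z hz0).trans (kernelMaj_le_near N hω0 hΛ z hz0 (hz.le.trans hr1))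
    rw [norm_smul, Real.norm_eq_abs, abs_of_nonneg (hκ0 z), sub_eq_add_neg, Real.rpow_add h0,
      Real.rpow_one]
    calc _ ≤ 2 * Λ * ‖z‖ ^ (-((N : ℝ) + α)) * ‖z‖ := by gcongr
      _ = _ := by ring
  have hint : IntegrableOn (fun z => κ z • z) (Metric.ball 0 r) :=
    hb.mono' (Measurable.aestronglyMeasurable (by fun_prop)) hle
  refine ⟨_, tendsto_trunc _ (fun z => ‖z‖) measurable_norm ?_ _ hint, 
    norm_integral_le_of_norm_le hb hle⟩
  filter_upwards [ae_ne_zero N hN _] with z hz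
  exact norm_pos_iff.2 hz

/-- For `α ≥ 1` the first moment over the shell `ε ≤ |z| < r` is computed in polar coordinates;
cancellation on spheres makes the radial integrand `O(s^{ν-α})`, which is integrable at `0`. -/
lemma drift_supercritical (N : ℕ) (hN : 1 ≤ N) {α ω Λ r ν τ : ℝ} (hα0 : 0 < α) (hωα : ω < α)
    (hr1 : r ≤ 1) (hν : α - 1 < ν)
    (κ : EuclideanSpace ℝ (Fin N) → ℝ) (hκm : Measurable κ)
    (hκ0 : ∀ z, 0 ≤ κ z) (hκ : ∀ z, z ≠ 0 → κ z ≤ kernelMaj N α ω Λ z)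
    (hcancel : ∀ s ∈ Ioo 0 r,
      ‖∫ σ : Metric.sphere (0 : EuclideanSpace ℝ (Fin N)) 1,
        (κ (s • σ.1) * ‖s • σ.1‖ ^ ((N : ℝ) + α)) • σ.1
          ∂(volume : Measure (EuclideanSpace ℝ (Fin N))).toSphere‖ ≤ τ * s ^ ν) :
    ∃ w : EuclideanSpace ℝ (Fin N), Tendsto (fun ε : ℝ =>
        ∫ z in {z | ε ≤ ‖z‖}, κ z • z ∂(volume.restrict (Metric.ball 0 r)))
        (nhdsWithin 0 (Ioi 0)) (nhds w) ∧
      ‖w‖ ≤ ∫ s in Ioo (0 : ℝ) r, τ * s ^ (ν - α) := by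
  have : Nonempty (Fin N) := ⟨⟨0, hN⟩⟩
  set U : ℝ → EuclideanSpace ℝ (Fin N) := fun s => s ^ (N - 1) •
    ∫ σ : Metric.sphere (0 : EuclideanSpace ℝ (Fin N)) 1, κ (s • σ.1) • (s • σ.1) ∂(volume : Measure (EuclideanSpace ℝ (Fin N))).toSphere with hU
  have hUm : StronglyMeasurable U := by
    have h1 : StronglyMeasurable (Function.uncurry fun (s : ℝ) (σ : Metric.sphere (0 : EuclideanSpace ℝ (Fin N)) 1) =>
        κ (s • σ.1) • (s • σ.1)) := by
      apply Measurable.stronglyMeasurable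
      unfold Function.uncurry
      have : Measurable fun p : ℝ × Metric.sphere (0 : EuclideanSpace ℝ (Fin N)) 1 => p.1 • p.2.1 := by fun_prop
      exact (hκm.comp this).smul this
    exact (measurable_id.pow_const (N - 1)).stronglyMeasurable.smul h1.integral_prod_right
  have hUb : ∀ s ∈ Ioo 0 r, ‖U s‖ ≤ τ * s ^ (ν - α) := by
    intro s hs
    have hs0 : 0 < s := hs.1
    have h1 : U s = s ^ (-α) • ∫ σ : Metric.sphere (0 : EuclideanSpace ℝ (Fin N)) 1,
        (κ (s • σ.1) * ‖s • σ.1‖ ^ ((N : ℝ) + α)) • σ.1 ∂(volume : Measure (EuclideanSpace ℝ (Fin N))).toSphere := by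
      simp only [hU]
      rw [← integral_smul, ← integral_smul]
      congr 1
      ext1 σ
      have hσ : ‖s • σ.1‖ = s := by simp [norm_smul, abs_of_pos hs0]
      rw [hσ, smul_smul, smul_smul, smul_smul]
      congr 1
      have h2 : s ^ (-α) * s ^ ((N : ℝ) + α) = s ^ (N - 1) * s := by
        rw [← Real.rpow_add hs0, ← pow_succ, Nat.sub_add_cancel hN, ← Real.rpow_natCast]
        congr 1
        ring
      linear_combination (-κ (s • σ.1)) * h2
    rw [h1, norm_smul, Real.norm_eq_abs, abs_of_pos (Real.rpow_pos_of_pos hs0 _)]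
    calc _ ≤ s ^ (-α) * (τ * s ^ ν) := by gcongr; exact hcancel s hs
      _ = τ * s ^ (ν - α) := by rw [sub_eq_add_neg, Real.rpow_add hs0]; ring
  have hb : IntegrableOn (fun s : ℝ => τ * s ^ (ν - α)) (Ioo 0 r) :=
    ((integrableOn_Ioc_iff_integrableOn_Ioo).1
      (intervalIntegral.intervalIntegrable_rpow' (a := 0) (b := r) (by linarith)).1).const_mul τ
  have hUae : ∀ᵐ s ∂(volume.restrict (Ioo 0 r)), ‖U s‖ ≤ τ * s ^ (ν - α) := by
    filter_upwards [ae_restrict_mem measurableSet_Ioo] with s hs using hUb s hs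
  have hUi : IntegrableOn U (Ioo 0 r) := hb.mono' hUm.aestronglyMeasurable hUae
  have hlim := tendsto_trunc (volume.restrict (Ioo 0 r)) (fun s : ℝ => s) measurable_id
    (by filter_upwards [ae_restrict_mem measurableSet_Ioo] with s hs using hs.1) U hUi
  refine ⟨_, hlim.congr' ?_, norm_integral_le_of_norm_le hb hUae⟩
  filter_upwards [self_mem_nhdsWithin] with ε hε
  have hε0 : 0 < ε := hε
  have hmS : MeasurableSet {z : EuclideanSpace ℝ (Fin N) | ε ≤ ‖z‖} := measurableSet_le measurable_const measurable_norm
  have hmI : MeasurableSet {s : ℝ | ε ≤ s} := measurableSet_Ici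
  rw [Measure.restrict_restrict hmS, Measure.restrict_restrict hmI]
  set A : Set (EuclideanSpace ℝ (Fin N)) := {z | ε ≤ ‖z‖} ∩ Metric.ball 0 r with hA
  have hAm : MeasurableSet A := hmS.inter measurableSet_ball
  have hGi : Integrable (A.indicator fun z => κ z • z) := by
    rw [integrable_indicator_iff hAm]
    have hd := (integrableOn_kernelMaj N hN (Λ := Λ) hα0 hωα hε0).mono_set (s := A) (by
      intro z hz
      simpa using hz.1)
    refine hd.mono' (Measurable.aestronglyMeasurable (by fun_prop)) ?_
    filter_upwards [ae_restrict_mem hAm] with z hz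
    have hz1 : ε ≤ ‖z‖ := hz.1
    have hz2 : ‖z‖ < r := by simpa using hz.2
    rw [norm_smul, Real.norm_eq_abs, abs_of_nonneg (hκ0 z)]
    have := hκ z (norm_pos_iff.1 (hε0.trans_le hz1))
    have h0 := hκ0 z
    nlinarith
  rw [← integral_indicator hAm, integral_polar _ hGi, finrank_euclideanSpace_fin,
    ← integral_indicator measurableSet_Ioi, ← integral_indicator (hmI.inter measurableSet_Ioo)]
  congr 1
  ext1 s
  by_cases hs : 0 < s
  · have hσ : ∀ σ : Metric.sphere (0 : EuclideanSpace ℝ (Fin N)) 1, ‖s • σ.1‖ = s := fun σ => by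
      simp [norm_smul, abs_of_pos hs]
    by_cases hs2 : ε ≤ s ∧ s < r
    · have hmem : ∀ σ : Metric.sphere (0 : EuclideanSpace ℝ (Fin N)) 1, s • σ.1 ∈ A := fun σ =>
        ⟨by simpa [hσ] using hs2.1, by simpa [hσ] using hs2.2⟩
      rw [indicator_of_mem (show s ∈ {s | ε ≤ s} ∩ Ioo 0 r from ⟨hs2.1, hs, hs2.2⟩),
        indicator_of_mem (show s ∈ Ioi 0 from hs)]
      simp only [hU, indicator_of_mem (hmem _)]
    · have hmem : ∀ σ : Metric.sphere (0 : EuclideanSpace ℝ (Fin N)) 1, s • σ.1 ∉ A := fun σ h =>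
        hs2 ⟨by simpa [hσ] using h.1, by simpa [hσ] using h.2⟩
      rw [indicator_of_notMem (show s ∉ {s | ε ≤ s} ∩ Ioo 0 r from fun h => hs2 ⟨h.1, h.2.2⟩),
        indicator_of_mem (show s ∈ Ioi 0 from hs)]
      simp only [indicator_of_notMem (hmem _), integral_zero, smul_zero]
  · rw [indicator_of_notMem (show s ∉ {s | ε ≤ s} ∩ Ioo 0 r from fun h => hs h.2.1),
      indicator_of_notMem (show s ∉ Ioi 0 from hs)]

/-- The function `z ↦ K(t, x, x + z)` obeys the bound `kernelMaj`. -/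
lemma WeakStarKernel.le_kernelMaj {N : ℕ} {T : ℝ≥0∞}
    {K : ℝ → EuclideanSpace ℝ (Fin N) → EuclideanSpace ℝ (Fin N) → ℝ}
    {α : ℝ} {ζ : ℝ≥0∞} {ω Λ ν : ℝ} {s₀ : ℝ≥0∞} {τ : ℝ}
    (hK : WeakStarKernel N T K α ζ ω Λ ν s₀ τ) {t : ℝ} (ht : 0 ≤ t) (htT : ENNReal.ofReal t ≤ T)
    (x z : EuclideanSpace ℝ (Fin N)) (hz : z ≠ 0) :
    K t x (x + z) ≤ kernelMaj N α ω Λ z := by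
  have h0 : 0 < ‖z‖ := norm_pos_iff.2 hz
  have h := hK.upper t x (x + z) ht htT (by simpa using hz)
  have hn : ‖x - (x + z)‖ = ‖z‖ := by rw [sub_add_cancel_left, norm_neg]
  rw [hn, ← le_div_iff₀ (Real.rpow_pos_of_pos h0 _)] at h
  refine h.trans_eq ?_
  unfold kernelMaj
  rw [Real.rpow_sub h0, Real.rpow_neg h0.le]
  field_simp

/-- The cancellation condition, stated for the surface measure of polar coordinates instead of the
Hausdorff measure. -/
lemma exists_cancel_toSphere (N : ℕ) (hN : 1 ≤ N) (α ω Λ ν τ : ℝ) (hα : 1 ≤ α) (ζ s₀ : ℝ≥0∞) :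
    ∃ c : ℝ, ∀ (T : ℝ≥0∞)
      (K : ℝ → EuclideanSpace ℝ (Fin N) → EuclideanSpace ℝ (Fin N) → ℝ),
      WeakStarKernel N T K α ζ ω Λ ν s₀ τ → ∀ (t : ℝ) (x : EuclideanSpace ℝ (Fin N)) (s : ℝ),
      0 ≤ t → ENNReal.ofReal t ≤ T → 0 < s → ENNReal.ofReal s < s₀ →
      ‖∫ σ : Metric.sphere (0 : EuclideanSpace ℝ (Fin N)) 1,
        (K t x (x + s • σ.1) * ‖s • σ.1‖ ^ ((N : ℝ) + α)) • σ.1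
          ∂(volume : Measure (EuclideanSpace ℝ (Fin N))).toSphere‖ ≤ c * s ^ ν := by
  obtain ⟨c, -, hc⟩ := exists_toSphere_eq_hausdorff N hN
  refine ⟨c.toReal * τ, fun T K hK t x s ht htT hs hss => ?_⟩
  have hemb : MeasurableEmbedding
      (Subtype.val : Metric.sphere (0 : EuclideanSpace ℝ (Fin N)) 1 → _) :=
    MeasurableEmbedding.subtype_coe Metric.isClosed_sphere.measurableSet
  have h1 := hemb.integral_map (μ := (volume : Measure (EuclideanSpace ℝ (Fin N))).toSphere)
    (fun σ : EuclideanSpace ℝ (Fin N) => kAssoc N α K t x (s • σ) • σ)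
  rw [hc, integral_smul_measure] at h1
  have h2 := hK.cancel hα t x s ht htT hs hss
  unfold sphereVecInt at h2
  simp only [kAssoc] at h1 h2
  rw [← h1, norm_smul, Real.norm_eq_abs, abs_of_nonneg ENNReal.toReal_nonneg, mul_assoc]
  gcongr

/-- The principal value of the first moment of the kernel over a small ball exists, with a bound
depending only on the parameters. -/
lemma exists_drift (N : ℕ) (hN : 1 ≤ N) (α : ℝ) (hα0 : 0 < α) (ζ : ℝ≥0∞)
    (ω : ℝ) (hω0 : 0 ≤ ω) (hωα : ω < α) (Λ : ℝ) (hΛ : 1 ≤ Λ) (ν : ℝ) (s₀ : ℝ≥0∞) (τ : ℝ)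
    (hcase : 1 ≤ α → α - 1 < ν ∧ 0 < s₀) :
    ∃ r C : ℝ, 0 < r ∧ r ≤ 1 ∧
      ∀ (T : ℝ≥0∞) (K : ℝ → EuclideanSpace ℝ (Fin N) → EuclideanSpace ℝ (Fin N) → ℝ),
        WeakStarKernel N T K α ζ ω Λ ν s₀ τ →
        ∀ (t : ℝ) (x : EuclideanSpace ℝ (Fin N)), 0 ≤ t → ENNReal.ofReal t ≤ T →
        ∃ w : EuclideanSpace ℝ (Fin N), Tendsto (fun ε : ℝ =>
          ∫ z in {z | ε ≤ ‖z‖}, K t x (x + z) • z ∂(volume.restrict (Metric.ball 0 r)))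
          (nhdsWithin 0 (Ioi 0)) (nhds w) ∧ ‖w‖ ≤ C := by
  have hmeas : ∀ (T : ℝ≥0∞) (K : ℝ → EuclideanSpace ℝ (Fin N) → EuclideanSpace ℝ (Fin N) → ℝ),
      WeakStarKernel N T K α ζ ω Λ ν s₀ τ → ∀ (t : ℝ) (x : EuclideanSpace ℝ (Fin N)),
      Measurable fun z => K t x (x + z) := by
    intro T K hK t x
    exact hK.measurable.comp (g := fun p : ℝ × EuclideanSpace ℝ (Fin N) × EuclideanSpace ℝ (Fin N)
      => K p.1 p.2.1 p.2.2) (f := fun z => (t, x, x + z)) (by fun_prop)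
  by_cases hα : 1 ≤ α
  · obtain ⟨hν, hs₀⟩ := hcase hα
    obtain ⟨c, hc⟩ := exists_cancel_toSphere N hN α ω Λ ν τ hα ζ s₀
    have hmin : min 1 s₀ ≠ ∞ := ne_top_of_le_ne_top ENNReal.one_ne_top (min_le_left _ _)
    refine ⟨(min 1 s₀).toReal, _, ENNReal.toReal_pos (lt_min one_pos hs₀).ne' hmin, ?_,
      fun T K hK t x ht htT => drift_supercritical N hN (τ := c) hα0 hωα ?_ hν _ (hmeas T K hK t x)
        (fun z => hK.nonneg t x _) (fun z hz => hK.le_kernelMaj ht htT x z hz) fun s hs => ?_⟩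
    · exact ENNReal.toReal_le_of_le_ofReal zero_le_one (by simp)
    · exact ENNReal.toReal_le_of_le_ofReal zero_le_one (by simp)
    · refine hc T K hK t x s ht htT hs.1 ?_
      exact ((ENNReal.ofReal_lt_iff_lt_toReal hs.1.le hmin).2 hs.2).trans_le (min_le_right _ _)
  · exact ⟨1, _, one_pos, le_rfl, fun T K hK t x ht htT =>
      drift_subcritical N hN (not_le.1 hα) hω0 hΛ le_rfl _ (hmeas T K hK t x)
        (fun z => hK.nonneg t x _) (fun z hz => hK.le_kernelMaj ht htT x z hz)⟩

/-- `T^K_t(f)` is well-defined pointwise for `f ∈ C²(ℝ^N) ∩ L¹(ℝ^N)`, with an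
explicit bound (Lemma 2.2 of the paper). -/
theorem pv_welldefined_C2_L1
    (N : ℕ) (hN : 1 ≤ N)
    (α : ℝ) (hα0 : 0 < α) (hα2 : α < 2)
    (ζ : ℝ≥0∞) (hζ : 0 < ζ)
    (ω : ℝ) (hω0 : 0 ≤ ω) (hωα : ω < α)
    (Λ : ℝ) (hΛ : 1 ≤ Λ)
    (ν : ℝ) (s₀ : ℝ≥0∞) (τ : ℝ)
    (hcase : 1 ≤ α → α - 1 < ν ∧ ν < 1 ∧ 0 < s₀ ∧ 0 ≤ τ ∧ ν + ω < min (N : ℝ) α) :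
    ∃ C : ℝ, 0 < C ∧
      ∀ (T : ℝ≥0∞)
        (K : ℝ → EuclideanSpace ℝ (Fin N) → EuclideanSpace ℝ (Fin N) → ℝ),
        WeakStarKernel N T K α ζ ω Λ ν s₀ τ →
        ∀ f : EuclideanSpace ℝ (Fin N) → ℝ, ContDiff ℝ 2 f → Integrable f →
        ∀ (t : ℝ) (x : EuclideanSpace ℝ (Fin N)), 0 ≤ t → ENNReal.ofReal t ≤ T →
          ∃ L : ℝ, HasPVIntegral N K t f x L ∧
            |L| ≤ C * (|f x| + (∫ y, |f y|) + ‖fderiv ℝ f x‖ +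
              sSup ((fun y => ‖iteratedFDeriv ℝ 2 f y‖) '' Metric.closedBall x 1)) := by
  obtain ⟨r, C₁, hr, hr1, hdrift⟩ := exists_drift N hN α hα0 ζ ω hω0 hωα Λ hΛ ν s₀ τ
    (fun h => ⟨(hcase h).1, (hcase h).2.2.1⟩)
  set H : ℝ := ∫ z in (Metric.ball 0 r)ᶜ, kernelMaj N α ω Λ z
  set m : ℝ := Λ * (r ^ (-((N : ℝ) + α)) + r ^ (ω - ((N : ℝ) + α)))
  set C₂ : ℝ := ∫ z in Metric.ball (0 : EuclideanSpace ℝ (Fin N)) r,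
    2 * Λ * ‖z‖ ^ (2 - ((N : ℝ) + α))
  refine ⟨|H| + |m| + |C₂| + |C₁| + 1, by positivity, ?_⟩
  intro T K hK f hf hfi t x ht htT
  obtain ⟨w, hw, hwC⟩ := hdrift T K hK t x ht htT
  set κ : EuclideanSpace ℝ (Fin N) → ℝ := fun z => K t x (x + z) with hκdef
  have hκm : Measurable κ :=
    hK.measurable.comp (g := fun p : ℝ × EuclideanSpace ℝ (Fin N) × EuclideanSpace ℝ (Fin N)
      => K p.1 p.2.1 p.2.2) (f := fun z => (t, x, x + z)) (by fun_prop)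
  have hκ0 : ∀ z, 0 ≤ κ z := fun z => hK.nonneg t x _
  have hκ : ∀ z, z ≠ 0 → κ z ≤ kernelMaj N α ω Λ z := fun z hz => hK.le_kernelMaj ht htT x z hz
  have hfar := fun (ρ : ℝ) (hρ : 0 < ρ) =>
    far_integrable N hN hα0 hωα hΛ hρ κ hκm hκ0 hκ f hf.continuous hfi x
  obtain ⟨hnear, hnearb⟩ := near_integrable N hN hα2 hω0 hΛ hr1 κ hκm hκ0 hκ f hf x
  set A : ℝ := ∫ z in (Metric.ball 0 r)ᶜ, (f x - f (x + z)) * κ z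
  set B : ℝ := ∫ z in Metric.ball 0 r, (f x - f (x + z) + fderiv ℝ f x z) * κ z
  set M := sSup ((fun y => ‖iteratedFDeriv ℝ 2 f y‖) '' Metric.closedBall x 1) with hM
  have hM0 : 0 ≤ M := by
    refine Real.sSup_nonneg ?_
    rintro _ ⟨y, -, rfl⟩
    exact norm_nonneg _
  refine ⟨A + (B - fderiv ℝ f x w), ?_, ?_⟩
  · have hlimB := tendsto_trunc (volume.restrict (Metric.ball (0 : EuclideanSpace ℝ (Fin N)) r))
      (fun z => ‖z‖) measurable_norm
      (by filter_upwards [ae_ne_zero N hN _] with z hz using norm_pos_iff.2 hz) _ hnear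
    have hlimD := ((fderiv ℝ f x).continuous.tendsto w).comp hw
    have hlim := (hlimB.sub hlimD).const_add A
    refine hlim.congr' ?_
    filter_upwards [Ioo_mem_nhdsGT hr] with ε hε
    obtain ⟨hε0, hεr⟩ := hε
    have hmS : MeasurableSet {z : EuclideanSpace ℝ (Fin N) | ε ≤ ‖z‖} :=
      measurableSet_le measurable_const measurable_norm
    have hSc : {z : EuclideanSpace ℝ (Fin N) | ε ≤ ‖z‖} = (Metric.ball 0 ε)ᶜ := by
      ext z; simp
    have hfε : IntegrableOn (fun z => (f x - f (x + z)) * κ z) {z | ε ≤ ‖z‖} := by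
      rw [hSc]; exact (hfar ε hε0).1
    -- the kernel is bounded by an integrable function away from the origin, and `|z| ≤ 1`
    have hdε : IntegrableOn (fun z => κ z • z) ({z | ε ≤ ‖z‖} ∩ Metric.ball 0 r) := by
      have hd := (integrableOn_kernelMaj N hN (Λ := Λ) hα0 hωα hε0).mono_set
        (s := {z | ε ≤ ‖z‖} ∩ Metric.ball 0 r) (by rw [hSc]; exact inter_subset_left)
      refine hd.mono' (Measurable.aestronglyMeasurable (by fun_prop)) ?_
      filter_upwards [ae_restrict_mem (hmS.inter measurableSet_ball)] with z hz
      have hz1 : ε ≤ ‖z‖ := hz.1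
      have hz2 : ‖z‖ < r := by simpa using hz.2
      rw [norm_smul, Real.norm_eq_abs, abs_of_nonneg (hκ0 z)]
      have := hκ z (norm_pos_iff.1 (hε0.trans_le hz1))
      have h0 := hκ0 z
      nlinarith
    -- translation `y = x + z`
    have htrans : ∫ y in {y : EuclideanSpace ℝ (Fin N) | ε ≤ ‖x - y‖}, (f x - f y) * K t x y =
        ∫ z in {z | ε ≤ ‖z‖}, (f x - f (x + z)) * κ z := by
      have hmS' : MeasurableSet {y : EuclideanSpace ℝ (Fin N) | ε ≤ ‖x - y‖} :=
        measurableSet_le measurable_const (by fun_prop)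
      rw [← integral_indicator hmS', ← integral_indicator hmS,
        ← integral_add_left_eq_self _ x]
      congr 1
      ext1 z
      simp [indicator, hκdef]
    rw [htrans]
    have hsplit : {z : EuclideanSpace ℝ (Fin N) | ε ≤ ‖z‖} =
        (Metric.ball 0 r)ᶜ ∪ ({z | ε ≤ ‖z‖} ∩ Metric.ball 0 r) := by
      ext z
      simp only [mem_ofPred_eq, mem_union, mem_compl_iff, mem_ball_zero_iff, mem_inter_iff, not_lt]
      constructor
      · intro h
        rcases le_or_gt r ‖z‖ with h' | h'
        · exact Or.inl h'
        · exact Or.inr ⟨h, h'⟩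
      · rintro (h | h)
        · exact hεr.le.trans h
        · exact h.1
    have hdisj : Disjoint (Metric.ball (0 : EuclideanSpace ℝ (Fin N)) r)ᶜ
        ({z | ε ≤ ‖z‖} ∩ Metric.ball 0 r) :=
      disjoint_left.2 fun z hz hz' => hz hz'.2
    conv_rhs => rw [hsplit]
    rw [setIntegral_union hdisj (hmS.inter measurableSet_ball) (hfar r hr).1
      (hfε.mono_set inter_subset_left)]
    congr 1
    rw [Measure.restrict_restrict hmS, Function.comp_apply, Measure.restrict_restrict hmS,
      ← ContinuousLinearMap.integral_comp_comm _ hdε,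
      ← integral_sub (hnear.mono_set inter_subset_right)
        ((fderiv ℝ f x).integrable_comp hdε)]
    congr 1
    ext1 z
    simp only [map_smul, smul_eq_mul]
    ring
  · have hA := (hfar r hr).2
    have hI : 0 ≤ ∫ y, |f y| := integral_nonneg fun y => abs_nonneg _
    have hD : |fderiv ℝ f x w| ≤ |C₁| * ‖fderiv ℝ f x‖ := by
      rw [← Real.norm_eq_abs]
      refine ((fderiv ℝ f x).le_opNorm w).trans ?_
      rw [mul_comm]
      gcongr
      exact hwC.trans (le_abs_self _)
    have hA' : |A| ≤ |H| * |f x| + |m| * ∫ y, |f y| := by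
      refine hA.trans ?_
      gcongr
      · exact le_abs_self H
      · exact le_abs_self m
    have hB' : |B| ≤ |C₂| * M := by
      refine hnearb.trans ?_
      gcongr
      exact le_abs_self C₂
    have h1 : |A + (B - fderiv ℝ f x w)| ≤ |A| + (|B| + |fderiv ℝ f x w|) :=
      (abs_add_le _ _).trans (by gcongr; exact abs_sub _ _)
    set a := |f x|
    set b := ∫ y, |f y|
    set d := ‖fderiv ℝ f x‖
    have ha : 0 ≤ a := abs_nonneg _
    have hd : 0 ≤ d := norm_nonneg _
    have hsum : 0 ≤ a + b + d + M := by positivity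
    calc |A + (B - fderiv ℝ f x w)|
        ≤ |H| * a + |m| * b + (|C₂| * M + |C₁| * d) := by linarith
      _ ≤ |H| * (a + b + d + M) + |m| * (a + b + d + M) +
          (|C₂| * (a + b + d + M) + |C₁| * (a + b + d + M)) := by
        gcongr <;> linarith
      _ ≤ (|H| + |m| + |C₂| + |C₁| + 1) * (a + b + d + M) := by linarith

end
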